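/- Let p be a prime and G₂ a special p-group with center of order p³ and d(G₂) = d. Then p^{(1/2)d(d-1) − 3} ≤ |M(G₂)| ≤ p^{(1/2)d(d-1) + 6}. -/

import Mathlib

/-- The Schur multiplier of a group `G`: the second cohomology group `H²(G, ℂˣ)`
of `G` with coefficients in `ℂˣ` (with trivial `G`-action), as in the paper. -/
noncomputable def schurMultiplier (G : Type) [Group G] : Type :=
  groupCohomology (Rep.trivial ℤ G (Additive ℂˣ)) 2

/-! Bundle all two-cocycles `G × G → ℂˣ` into one cocycle with values in a product of copies of
`ℂˣ`, and let `E` be the central extension of `G` it defines. As `ℂˣ` is divisible, a cocycle is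
determined up to coboundaries by the character it induces on `ker (E → G) ∩ E'`, so
`|M(G)| ≤ |E'| / |G'|`.

Suppose that `G' ≤ Z(G)`, `|G'| = p ^ k`, and `G` is generated by `d` elements whose `p`-th powers
lie in `G'`. The derived subgroup of `E / [E', E]` is central and is generated by the commutators
of the `d.choose 2` pairs of generators, each of order dividing `p`. The group `[E', E]` is
generated by the values of a pairing on `E' × E` which satisfies the Jacobi identity by Hall–Witt.
If the values `[z, x]` are already known for a fixed `x`, this identity makes `[[x, g], h]`
symmetric in `g` and `h`; repeating this with `x` chosen among the elements with new commutators
generates `[E', E]` by `(k + 1).choose 2 + k` elements of order dividing `p`.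

For the lower bound, a strictly upper triangular `d × d` matrix over `𝔽_p` gives a bimultiplicative
pairing on `G`, hence a two-cocycle. If `B` is the coboundary of `b`, then `b` restricts to a
character of `G'` which recovers `B` up to symmetric pairings. So the kernel of the map from the
`p ^ d.choose 2` matrices to `M(G)` has at most `|G'|` elements.
-/

namespace SchurMultiplier

open Subgroup
open scoped Finset commutatorElement IsMulCommutative

section JacobiPairing

variable {p s : ℕ} {Z G M : Type*} [Group Z] [Group G] [CommGroup M]

theorem exists_lt_index_eq_pow_of_lt (hp : p.Prime) {A B : Subgroup Z} (hA : A.index = p ^ s)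
    (hAB : A < B) : ∃ r < s, B.index = p ^ r := by
  have hmul := relIndex_mul_index hAB.le
  obtain ⟨r, hrs, hr⟩ := (Nat.dvd_prime_pow hp).mp (hA ▸ index_dvd_of_le hAB.le)
  refine ⟨r, hrs.lt_of_ne ?_, hr⟩
  rintro rfl
  rw [hA, hr, mul_eq_right₀ (pow_ne_zero _ hp.ne_zero), relIndex_eq_one] at hmul
  exact hAB.not_ge hmul

theorem exists_finset_subset_sup_closure_index_eq_pow (hp : p.Prime) {A : Subgroup Z}
    (hA : A.index = p ^ s) (S : Set Z) :
    ∃ t : Finset Z, ↑t ⊆ S ∧ S ⊆ (A ⊔ closure (t : Set Z) : Subgroup Z) ∧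
      ∃ r, (A ⊔ closure (t : Set Z)).index = p ^ r ∧ #t + r ≤ s := by
  classical
  induction s using Nat.strong_induction_on generalizing A with
  | _ s ih =>
    by_cases hS : S ⊆ A
    · exact ⟨∅, by simp, by simpa using hS, s, by simpa using hA, by simp⟩
    · obtain ⟨x, hxS, hxA⟩ := Set.not_subset.mp hS
      have hlt : A < A ⊔ closure {x} :=
        left_lt_sup.mpr fun h => hxA (h (mem_closure_singleton_self x))
      obtain ⟨n, hns, hn⟩ := exists_lt_index_eq_pow_of_lt hp hA hlt
      obtain ⟨t, htS, hSt, r, hr, hcard⟩ := ih n hns hn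
      have hsup : A ⊔ closure {x} ⊔ closure (t : Set Z) =
          A ⊔ closure ((insert x t : Finset Z) : Set Z) := by
        rw [Finset.coe_insert, Set.insert_eq, Subgroup.closure_union, sup_assoc]
      rw [hsup] at hSt hr
      refine ⟨insert x t, ?_, hSt, r, hr, ?_⟩
      · simpa [Set.insert_subset_iff] using ⟨hxS, htS⟩
      · have := Finset.card_insert_le x t
        lia

/-- The left kernel modulo `N` of a pairing `β`. -/
def leftKer (β : Z →* G →* M) (N : Subgroup M) : Subgroup Z where
  carrier := {z | ∀ g, β z g ∈ N}
  mul_mem' hz hw g := by simpa using mul_mem (hz g) (hw g)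
  one_mem' g := by simp
  inv_mem' hz g := by simpa using hz g

theorem leftKer_mono (β : Z →* G →* M) : Monotone (leftKer β) := fun _ _ h _ hz g => h (hz g)

theorem exists_finset_forall_mem_sup_closure {α : Type*} {f : α → α → M} {N : Subgroup M}
    (hf : ∀ K, N ≤ K → ∀ a b, f a b ∈ K → f b a ∈ K) (P : Finset (Sym2 α)) :
    ∃ T : Finset M, #T ≤ #P ∧ (∀ t ∈ T, ∃ a b, s(a, b) ∈ P ∧ f a b = t) ∧
      ∀ a b, s(a, b) ∈ P → f a b ∈ N ⊔ closure (T : Set M) := by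
  classical
  let F : Sym2 α → M := fun e => f (Quot.out e).1 (Quot.out e).2
  have hout (e : Sym2 α) : s((Quot.out e).1, (Quot.out e).2) = e := Quot.out_eq e
  refine ⟨P.image F, Finset.card_image_le, ?_, fun a b hab => ?_⟩
  · simp only [Finset.mem_image]
    rintro _ ⟨e, he, rfl⟩
    exact ⟨_, _, (hout e).symm ▸ he, rfl⟩
  · have hF : F s(a, b) ∈ N ⊔ closure (↑(P.image F) : Set M) :=
      mem_sup_right (subset_closure (Finset.mem_image_of_mem F hab))
    rcases Sym2.eq_iff.mp (hout s(a, b)) with ⟨h₁, h₂⟩ | ⟨h₁, h₂⟩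
    · simpa only [F, h₁, h₂] using hF
    · exact hf _ le_sup_left b a (by simpa only [F, h₁, h₂] using hF)

variable {c : G → G → Z} {β : Z →* G →* M}

theorem apply_mul_inv_apply_swap_mem (hskew : ∀ x y, c y x = (c x y)⁻¹)
    (hjacobi : ∀ x y z, β (c x y) z * β (c y z) x * β (c z x) y = 1) {N : Subgroup M} {x : G}
    (hx : ∀ z, β z x ∈ N) (g h : G) : β (c x g) h * (β (c x h) g)⁻¹ ∈ N := by
  have hswap : β (c x g) h * (β (c x h) g)⁻¹ = (β (c g h) x)⁻¹ := by
    rw [eq_inv_iff_mul_eq_one, mul_right_comm]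
    simpa [hskew x h] using hjacobi x g h
  exact hswap ▸ inv_mem (hx _)

theorem exists_finset_forall_apply_right_mem (hp : p.Prime) {A : Subgroup Z}
    (hA : A.index = p ^ s) {N : Subgroup M} (hAN : A ≤ leftKer β N) (x : G) :
    ∃ T : Finset M, #T ≤ s ∧ (∀ t ∈ T, ∃ z g, β z g = t) ∧
      ∀ z, β z x ∈ N ⊔ closure (T : Set M) := by
  classical
  obtain ⟨t, -, ht, r, -, hcard⟩ := exists_finset_subset_sup_closure_index_eq_pow hp hA Set.univ
  refine ⟨t.image (β · x), by have := t.card_image_le (f := (β · x)); lia, ?_, fun z => ?_⟩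
  · simp only [Finset.mem_image]
    rintro _ ⟨z, -, rfl⟩
    exact ⟨z, x, rfl⟩
  · have hle : A ⊔ closure (t : Set Z) ≤
        (N ⊔ closure ((t.image (β · x) : Finset M) : Set M)).comap (β.flip x) := by
      refine sup_le (fun a ha => mem_sup_left (hAN ha x)) ((closure_le _).mpr fun z hz => ?_)
      exact mem_sup_right (subset_closure (Finset.mem_image_of_mem _ hz))
    exact hle (ht (Set.mem_univ z))

theorem sup_closure_image_le_leftKer (hskew : ∀ x y, c y x = (c x y)⁻¹)
    (hjacobi : ∀ x y z, β (c x y) z * β (c y z) x * β (c z x) y = 1)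
    {A : Subgroup Z} {N : Subgroup M} (hAN : A ≤ leftKer β N) {x : G} (hx : ∀ z, β z x ∈ N)
    {u : Set G} (hu : ∀ g ∈ u, ∀ h ∈ u, β (c x g) h ∈ N)
    (hgen : ∀ g, c x g ∈ A ⊔ closure (c x '' u)) : A ⊔ closure (c x '' u) ≤ leftKer β N := by
  refine sup_le hAN ((closure_le _).mpr ?_)
  rintro _ ⟨h, hh, rfl⟩ g
  have hle : A ⊔ closure (c x '' u) ≤ N.comap (β.flip h) := by
    refine sup_le (fun a ha => hAN ha h) ((closure_le _).mpr ?_)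
    rintro _ ⟨g', hg', rfl⟩
    exact hu g' hg' h hh
  rw [← inv_mul_cancel_right (β (c x h) g) (β (c x g) h)]
  exact mul_mem (apply_mul_inv_apply_swap_mem hskew hjacobi hx h g) (hle (hgen g))

/-- Once the values `β z x` are known, `β (c x g) h` is symmetric in `g` and `h` by the Jacobi
identity; if `u.image (c x)` generates the elements `c x g` modulo `A`, it is enough to adjoin one
value for each unordered pair in `u`. -/
theorem exists_index_lt_and_finset_le_leftKer (hp : p.Prime)
    (hskew : ∀ x y, c y x = (c x y)⁻¹)
    (hjacobi : ∀ x y z, β (c x y) z * β (c y z) x * β (c z x) y = 1) {A : Subgroup Z}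
    (hA : A.index = p ^ s) {N : Subgroup M} (hAN : A ≤ leftKer β N) {x y : G} (hxy : c x y ∉ A) :
    ∃ r < s, ∃ B : Subgroup Z, B.index = p ^ r ∧ ∃ T : Finset M,
      2 * #T + r * (r + 3) ≤ s * (s + 3) ∧ (∀ t ∈ T, ∃ z g, β z g = t) ∧
        B ≤ leftKer β (N ⊔ closure (T : Set M)) := by
  classical
  obtain ⟨T₁, hT₁, hval₁, hx⟩ := exists_finset_forall_apply_right_mem hp hA hAN x
  obtain ⟨t, htx, hxt, r, hr, hcard⟩ :=
    exists_finset_subset_sup_closure_index_eq_pow hp hA (Set.range (c x))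
  obtain ⟨u, -, hu, rfl⟩ := Finset.exists_subset_injOn_image_eq_of_surjOn Set.univ t (by
    simpa [Set.SurjOn] using htx)
  rw [Finset.coe_image] at hxt hr
  rw [Finset.card_image_of_injOn hu] at hcard
  obtain ⟨T₂, hT₂, hval₂, hu₂⟩ := exists_finset_forall_mem_sup_closure
    (f := fun g h => β (c x g) h) (fun K hK g h hgh => by
      simpa using mul_mem
        (hK (apply_mul_inv_apply_swap_mem hskew hjacobi hx h g)) hgh) u.sym2
  have hupos : 0 < #u := by
    rw [Finset.card_pos, Finset.nonempty_iff_ne_empty]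
    rintro rfl
    exact hxy (by simpa using hxt ⟨y, rfl⟩)
  have hsup : N ⊔ closure ((T₁ ∪ T₂ : Finset M) : Set M) =
      N ⊔ closure (T₁ : Set M) ⊔ closure (T₂ : Set M) := by
    rw [Finset.coe_union, Subgroup.closure_union, sup_assoc]
  refine ⟨r, by lia, _, hr, T₁ ∪ T₂, ?_, ?_, ?_⟩
  · rw [Finset.card_sym2] at hT₂
    have hchoose := Nat.add_one_mul_choose_eq #u 1
    rw [Nat.choose_one_right] at hchoose
    have := Finset.card_union_le T₁ T₂
    nlinarith
  · intro t ht
    rcases Finset.mem_union.mp ht with ht | ht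
    · exact hval₁ t ht
    · obtain ⟨g, h, -, rfl⟩ := hval₂ t ht
      exact ⟨_, _, rfl⟩
  · rw [hsup]
    exact sup_closure_image_le_leftKer hskew hjacobi
      (hAN.trans (leftKer_mono β (le_sup_left.trans le_sup_left)))
      (fun z => mem_sup_left (hx z))
      (fun g hg h hh => hu₂ g h (Finset.mk_mem_sym2_iff.mpr ⟨hg, hh⟩)) fun g => hxt ⟨g, rfl⟩

theorem exists_finset_leftKer_sup_closure_eq_top (hp : p.Prime)
    (hskew : ∀ x y, c y x = (c x y)⁻¹) (hc : closure {z | ∃ x y, c x y = z} = ⊤)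
    (hjacobi : ∀ x y z, β (c x y) z * β (c y z) x * β (c z x) y = 1) {A : Subgroup Z}
    (hA : A.index = p ^ s) {N : Subgroup M} (hAN : A ≤ leftKer β N) :
    ∃ T : Finset M, 2 * #T ≤ s * (s + 3) ∧ (∀ t ∈ T, ∃ z g, β z g = t) ∧
      leftKer β (N ⊔ closure (T : Set M)) = ⊤ := by
  classical
  induction s using Nat.strong_induction_on generalizing A N with
  | _ s ih =>
    by_cases hcA : ∀ x y, c x y ∈ A
    · have hAtop : A = ⊤ := top_le_iff.mp <| hc ▸ (closure_le _).mpr <| by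
        rintro _ ⟨x, y, rfl⟩
        exact hcA x y
      exact ⟨∅, by simp, by simp, top_le_iff.mp (by simpa [← hAtop] using hAN)⟩
    · push Not at hcA
      obtain ⟨x, y, hxy⟩ := hcA
      obtain ⟨r, hrs, B, hB, T₁, hT₁, hval₁, hBT₁⟩ :=
        exists_index_lt_and_finset_le_leftKer hp hskew hjacobi hA hAN hxy
      obtain ⟨T₂, hT₂, hval₂, htop⟩ := ih r hrs hB hBT₁
      refine ⟨T₁ ∪ T₂, ?_, fun t ht => (Finset.mem_union.mp ht).elim (hval₁ t) (hval₂ t), ?_⟩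
      · have := Finset.card_union_le T₁ T₂
        lia
      · rw [Finset.coe_union, Subgroup.closure_union, ← sup_assoc, htop]

end JacobiPairing

section CentralExtension

variable {p : ℕ} {E G M Z : Type*} [Group E] [Group G] [CommGroup M] [Group Z]

theorem commutatorElement_mem_commutator (x y : E) : ⁅x, y⁆ ∈ commutator E :=
  commutator_mem_commutator (mem_top x) (mem_top y)

open scoped Pointwise in
theorem finite_closure_and_card_le_pow (hp : 0 < p) {T : Finset M} (hT : ∀ t ∈ T, t ^ p = 1) :
    Finite (closure (T : Set M)) ∧ Nat.card (closure (T : Set M)) ≤ p ^ #T := by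
  classical
  induction T using Finset.induction_on with
  | empty =>
    rw [Finset.coe_empty, Subgroup.closure_empty]
    exact ⟨inferInstance, by simp⟩
  | insert t T ht ih =>
    obtain ⟨hfin, hcard⟩ := ih fun s hs => hT s (Finset.mem_insert_of_mem hs)
    have hpow : t ^ p = 1 := hT t (Finset.mem_insert_self t T)
    have hcoe : (closure ((insert t T : Finset M) : Set M) : Set M) =
        (zpowers t : Set M) * (closure (T : Set M) : Set M) := by
      rw [Finset.coe_insert, Set.insert_eq, Subgroup.closure_union, mul_normal,
        ← zpowers_eq_closure]
    have hzfin : (zpowers t : Set M).Finite :=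
      finite_zpowers.mpr (isOfFinOrder_iff_pow_eq_one.mpr ⟨p, hp, hpow⟩)
    constructor
    · exact Set.Finite.to_subtype (hcoe ▸ hzfin.mul (Set.toFinite _))
    · rw [Finset.card_insert_of_notMem ht, pow_succ']
      calc Nat.card (closure ((insert t T : Finset M) : Set M))
          = Nat.card ((zpowers t : Set M) * (closure (T : Set M) : Set M) : Set M) :=
            congrArg (fun s : Set M => Nat.card s) hcoe
        _ ≤ Nat.card (zpowers t) * Nat.card (closure (T : Set M)) := Set.natCard_mul_le
        _ ≤ p * p ^ #T := Nat.mul_le_mul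
            (Nat.card_zpowers t ▸ Nat.le_of_dvd hp (orderOf_dvd_of_pow_eq_one hpow)) hcard

/-- The bimultiplicative pairing `(z, g) ↦ ⁅f z, g⁆`, for a homomorphism `f` whose image has
central commutators with the whole group. -/
def commutatorPairing (f : Z →* E) (hf : ∀ z g, ⁅f z, g⁆ ∈ center E) : Z →* E →* center E :=
  MonoidHom.mk'
    (fun z => MonoidHom.mk' (fun g => ⟨⁅f z, g⁆, hf z g⟩) fun g h => Subtype.ext <| by
      change ⁅f z, g * h⁆ = ⁅f z, g⁆ * ⁅f z, h⁆
      rw [commutatorElement_mul_right_eq_mul_conj, mul_assoc _ g, mem_center_iff.mp (hf z h) g,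
        mul_assoc, mul_inv_cancel_right])
    fun z w => MonoidHom.ext fun g => Subtype.ext <| by
      change ⁅f (z * w), g⁆ = ⁅f z, g⁆ * ⁅f w, g⁆
      rw [map_mul, commutatorElement_mul_left_eq_conj_mul, mem_center_iff.mp (hf w g),
        mul_inv_cancel_right, mem_center_iff.mp (hf w g)]

@[simp]
theorem coe_commutatorPairing (f : Z →* E) (hf : ∀ z g, ⁅f z, g⁆ ∈ center E) (z : Z) (g : E) :
    (commutatorPairing f hf z g : E) = ⁅f z, g⁆ := rfl

theorem finite_and_card_commutator_range_top_le (hp : 0 < p) {f : Z →* E}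
    {hf : ∀ z g, ⁅f z, g⁆ ∈ center E} {T : Finset (center E)} (hT : ∀ t ∈ T, t ^ p = 1)
    (htop : leftKer (commutatorPairing f hf) (closure (T : Set (center E))) = ⊤) :
    Finite (⁅f.range, ⊤⁆ : Subgroup E) ∧ Nat.card (⁅f.range, ⊤⁆ : Subgroup E) ≤ p ^ #T := by
  have hle : ⁅f.range, ⊤⁆ ≤ (closure (T : Set (center E))).map (center E).subtype := by
    rw [commutator_le]
    rintro _ ⟨z, rfl⟩ g -
    have hz : z ∈ leftKer (commutatorPairing f hf) (closure (T : Set (center E))) :=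
      htop ▸ mem_top z
    exact ⟨_, hz g, rfl⟩
  obtain ⟨hfin, hcard⟩ := finite_closure_and_card_le_pow hp hT
  let e := equivMapOfInjective (closure (T : Set (center E))) _ (subtype_injective (center E))
  have := Finite.of_equiv _ e.toEquiv
  refine ⟨Finite.Set.subset _ hle, (card_le_of_le hle).trans ?_⟩
  rwa [← Nat.card_congr e.toEquiv]

theorem leftKer_eq_top_of_closure_sup_eq_top {γ : E →* E →* M} {C : Subgroup E}
    (hCl : ∀ c ∈ C, ∀ x, γ c x = 1) (hCr : ∀ c ∈ C, ∀ x, γ x c = 1) {S : Set E}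
    (hS : closure S ⊔ C = ⊤) {N : Subgroup M} (hN : ∀ x ∈ S, ∀ y ∈ S, γ x y ∈ N) :
    leftKer γ N = ⊤ := by
  refine top_le_iff.mp (hS ▸ sup_le ((closure_le _).mpr fun x hx y => ?_) fun c hc y => ?_)
  · have hle : closure S ⊔ C ≤ N.comap (γ x) :=
      sup_le ((closure_le _).mpr (hN x hx)) fun c hc => mem_comap.mpr (hCr c hc x ▸ one_mem N)
    exact hle (hS ▸ mem_top y)
  · exact hCl c hc y ▸ one_mem N

theorem finite_and_card_commutator_le_of_le_center (hp : 0 < p) (hE : commutator E ≤ center E)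
    {S : Finset E} (hS : closure (S : Set E) ⊔ center E = ⊤) (hpow : ∀ x ∈ S, x ^ p ∈ center E) :
    Finite (commutator E) ∧ Nat.card (commutator E) ≤ p ^ (#S).choose 2 := by
  classical
  let γ := commutatorPairing (MonoidHom.id E) fun x y =>
    hE (commutatorElement_mem_commutator x y)
  have hself (x : E) : γ x x = 1 := Subtype.ext (commutatorElement_self x)
  have hskew (x y : E) : γ y x = (γ x y)⁻¹ := Subtype.ext (commutatorElement_inv x y).symm
  have hcenter (c : E) (hc : c ∈ center E) (x : E) : γ c x = 1 :=
    Subtype.ext (commutatorElement_eq_one_iff_mul_comm.mpr (mem_center_iff.mp hc x).symm)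
  obtain ⟨T, hTcard, hval, hT⟩ := exists_finset_forall_mem_sup_closure
    (f := fun x y => γ x y) (N := ⊥) (fun K _ x y hxy => hskew x y ▸ inv_mem hxy)
    (S.offDiag.image (Function.uncurry Sym2.mk))
  rw [Sym2.card_image_offDiag] at hTcard
  have htop : leftKer γ (closure (T : Set (center E))) = ⊤ := by
    refine leftKer_eq_top_of_closure_sup_eq_top hcenter
      (fun c hc x => by rw [hskew, hcenter c hc, inv_one]) hS fun x hx y hy => ?_
    rcases eq_or_ne x y with rfl | hxy
    · exact hself x ▸ one_mem _
    · rw [← bot_sup_eq (Subgroup.closure _)]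
      exact hT x y (Finset.mem_image.mpr ⟨(x, y), Finset.mem_offDiag.mpr ⟨hx, hy, hxy⟩, rfl⟩)
  have hTpow (t) (ht : t ∈ T) : t ^ p = 1 := by
    obtain ⟨x, y, hxy, rfl⟩ := hval t ht
    obtain ⟨⟨x', y'⟩, hmem, heq⟩ := Finset.mem_image.mp hxy
    have hx : x ∈ S := by
      have := Finset.mem_offDiag.mp hmem
      rcases Sym2.eq_iff.mp heq with ⟨rfl, -⟩ | ⟨-, rfl⟩
      exacts [this.1, this.2.1]
    rw [← MonoidHom.pow_apply, ← map_pow, hcenter _ (hpow x hx)]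
  obtain ⟨hfin, hcard⟩ := finite_and_card_commutator_range_top_le hp hTpow htop
  rw [MonoidHom.range_eq_top.mpr Function.surjective_id, ← _root_.commutator_def] at hfin hcard
  exact ⟨hfin, hcard.trans (Nat.pow_le_pow_right hp hTcard)⟩

theorem map_commutator_of_surjective {f : E →* G} (hf : Function.Surjective f) :
    (commutator E).map f = commutator G := by
  rw [map_commutator_eq, MonoidHom.range_eq_top.mpr hf, ← _root_.commutator_def]

theorem card_commutator_eq_card_ker_inf_mul {f : E →* G} (hf : Function.Surjective f) :
    Nat.card (commutator E) = Nat.card (f.ker ⊓ commutator E : Subgroup E) *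
      Nat.card (commutator G) := by
  rw [← map_commutator_of_surjective hf, ← relIndex_ker, ← inf_relIndex_right, ← relIndex_bot_left,
    ← relIndex_bot_left, relIndex_mul_relIndex _ _ _ bot_le inf_le_right]

variable {k : ℕ} {π : E →* G}

theorem commutatorElement_mem_ker (hπ : Function.Surjective π) (hG : commutator G ≤ center G)
    {z : E} (hz : z ∈ commutator E) (g : E) : ⁅z, g⁆ ∈ π.ker := by
  have hπz : π z ∈ center G :=
    hG (map_commutator_of_surjective hπ ▸ mem_map_of_mem π hz)
  rw [MonoidHom.mem_ker, map_commutatorElement, commutatorElement_eq_one_iff_mul_comm]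
  exact (mem_center_iff.mp hπz (π g)).symm

theorem closure_commutators_eq_top :
    closure {z : commutator E | ∃ x y : E,
      ⟨⁅x, y⁆, commutatorElement_mem_commutator x y⟩ = z} = ⊤ := by
  refine map_injective (subtype_injective _) ?_
  rw [MonoidHom.map_closure, ← MonoidHom.range_eq_map, range_subtype]
  refine Eq.trans (congrArg _ ?_) (commutator_eq_closure E).symm
  ext z
  simp [commutatorSet]

theorem finite_and_card_commutator_commutator_top_le (hp : p.Prime)
    (hπ : Function.Surjective π) (hker : π.ker ≤ center E) (hG : commutator G ≤ center G)
    (hcard : Nat.card (commutator G) = p ^ k) (hpow : ∀ g : G, g ^ p ∈ commutator G) :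
    Finite (⁅commutator E, ⊤⁆ : Subgroup E) ∧
      Nat.card (⁅commutator E, ⊤⁆ : Subgroup E) ≤ p ^ ((k + 1).choose 2 + k) := by
  let c (x y : E) : commutator E := ⟨⁅x, y⁆, commutatorElement_mem_commutator x y⟩
  let β := commutatorPairing (commutator E).subtype fun z g =>
    hker (commutatorElement_mem_ker hπ hG z.2 g)
  have hskew (x y : E) : c y x = (c x y)⁻¹ := Subtype.ext (commutatorElement_inv x y).symm
  have hconj (z : commutator E) (g h : E) : β z (g * h * g⁻¹) = β z h := by
    rw [map_mul, map_mul, map_inv, mul_inv_cancel_comm]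
  have hjacobi (x y z : E) : β (c x y) z * β (c y z) x * β (c z x) y = 1 := by
    rw [← hconj _ y z, ← hconj _ z x, ← hconj _ x y]
    exact Subtype.ext (commutatorElement_commutatorElement_conj_mul x y z)
  have hcentral {g : E} (hg : g ∈ π.ker) (h : E) : ⁅g, h⁆ = 1 :=
    commutatorElement_eq_one_iff_mul_comm.mpr (mem_center_iff.mp (hker hg) h).symm
  have hA : (π.ker.subgroupOf (commutator E)).index = p ^ k := by
    rw [← hcard, ← map_commutator_of_surjective hπ, ← relIndex_ker, relIndex]
  obtain ⟨T, hTcard, hval, htop⟩ := exists_finset_leftKer_sup_closure_eq_top hp hskew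
    closure_commutators_eq_top hjacobi hA (N := ⊥) fun z hz g => Subtype.ext (hcentral hz g)
  have hβpow (z : commutator E) (g : E) : β z (g ^ p) = 1 := by
    have hle : commutator E ⊔ π.ker ≤ (β z).ker :=
      sup_le (Abelianization.commutator_subset_ker _) fun h hh => Subtype.ext <| by
        rw [coe_commutatorPairing, ← commutatorElement_inv, hcentral hh, inv_one, coe_one]
    refine hle ?_
    rw [← comap_map_eq, map_commutator_of_surjective hπ, mem_comap, map_pow]
    exact hpow _
  have hTpow (t) (ht : t ∈ T) : t ^ p = 1 := by
    obtain ⟨z, g, rfl⟩ := hval t ht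
    rw [← map_pow, hβpow]
  rw [bot_sup_eq] at htop
  obtain ⟨hfin, hle⟩ := finite_and_card_commutator_range_top_le hp.pos hTpow htop
  rw [range_subtype] at hfin hle
  have hchoose := Nat.add_one_mul_choose_eq k 1
  rw [Nat.choose_one_right] at hchoose
  exact ⟨hfin, hle.trans (Nat.pow_le_pow_right hp.pos (by lia))⟩

theorem map_center_le {f : E →* G} (hf : Function.Surjective f) :
    (center E).map f ≤ center G := by
  rintro _ ⟨z, hz, rfl⟩
  rw [mem_center_iff]
  intro g
  obtain ⟨x, rfl⟩ := hf g
  rw [← map_mul, ← map_mul, mem_center_iff.mp hz x]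

theorem comap_eq_top_of_closure_eq_top {S : Set G} (hS : closure S = ⊤) {L : Subgroup E}
    (hker : π.ker ≤ L) (hL : ∀ g ∈ S, ∃ x ∈ L, π x = g) : L = ⊤ := by
  have hmap : L.map π = ⊤ := top_le_iff.mp (hS ▸ (closure_le _).mpr hL)
  rw [← sup_eq_left.mpr hker, ← comap_map_eq, hmap, comap_top]

theorem finite_and_card_commutator_quotient_le {Q : Type*} [Group Q] {q : E →* Q} (hp : 0 < p)
    (hπ : Function.Surjective π) (hker : π.ker ≤ center E)
    (hpow : ∀ g : G, g ^ p ∈ commutator G) {S : Finset G} (hS : closure (S : Set G) = ⊤)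
    (hq : Function.Surjective q) (hQ : commutator Q ≤ center Q) :
    Finite (commutator Q) ∧ Nat.card (commutator Q) ≤ p ^ (#S).choose 2 := by
  classical
  have hcenter : (commutator G).comap π ≤ (center Q).comap q := by
    rw [← map_commutator_of_surjective hπ, comap_map_eq, ← map_le_iff_le_comap, Subgroup.map_sup,
      map_commutator_of_surjective hq]
    exact sup_le hQ ((map_mono hker).trans (map_center_le hq))
  let T : Finset Q := S.image (q ∘ Function.surjInv hπ)
  have hT : closure (T : Set Q) ⊔ center Q = ⊤ := by
    refine comap_injective hq ((comap_eq_top_of_closure_eq_top hS (π := π) ?_ fun g hg => ?_).trans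
      (comap_top q).symm)
    · exact (ker_le_comap π _).trans (hcenter.trans (comap_mono le_sup_right))
    · exact ⟨_, mem_sup_left (subset_closure (Finset.mem_image_of_mem _ hg)),
        Function.surjInv_eq hπ g⟩
  have hTpow (t) (ht : t ∈ T) : t ^ p ∈ center Q := by
    obtain ⟨g, -, rfl⟩ := Finset.mem_image.mp ht
    rw [Function.comp_apply, ← map_pow]
    refine hcenter ?_
    rw [mem_comap, map_pow]
    exact hpow _
  obtain ⟨hfin, hcard⟩ := finite_and_card_commutator_le_of_le_center hp hQ hT hTpow
  exact ⟨hfin, hcard.trans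
    (Nat.pow_le_pow_right hp (Nat.choose_le_choose 2 Finset.card_image_le))⟩

theorem finite_and_card_commutator_centralExtension_le (hp : p.Prime)
    (hπ : Function.Surjective π) (hker : π.ker ≤ center E) (hG : commutator G ≤ center G)
    (hcard : Nat.card (commutator G) = p ^ k) (hpow : ∀ g : G, g ^ p ∈ commutator G)
    {S : Finset G} (hS : closure (S : Set G) = ⊤) :
    Finite (commutator E) ∧
      Nat.card (commutator E) ≤ p ^ ((#S).choose 2 + ((k + 1).choose 2 + k)) := by
  have hq : Function.Surjective (QuotientGroup.mk' (⁅commutator E, ⊤⁆ : Subgroup E)) :=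
    QuotientGroup.mk'_surjective _
  have hQ : commutator (E ⧸ (⁅commutator E, ⊤⁆ : Subgroup E)) ≤ center _ := by
    rw [← commutator_top_right_eq_bot_iff_le_center, ← map_commutator_of_surjective hq,
      ← map_top_of_surjective _ hq, ← map_commutator, Subgroup.map_eq_bot_iff,
      QuotientGroup.ker_mk']
  obtain ⟨hfinQ, hcardQ⟩ := finite_and_card_commutator_quotient_le hp.pos hπ hker hpow hS hq hQ
  obtain ⟨hfinΓ, hcardΓ⟩ :=
    finite_and_card_commutator_commutator_top_le hp hπ hker hG hcard hpow
  have hmul := card_commutator_eq_card_ker_inf_mul hq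
  rw [QuotientGroup.ker_mk', inf_eq_left.mpr (commutator_le_left _ _)] at hmul
  refine ⟨Nat.finite_of_card_ne_zero (hmul ▸ (mul_pos Nat.card_pos Nat.card_pos).ne'), ?_⟩
  rw [hmul, add_comm, pow_add]
  exact Nat.mul_le_mul hcardΓ hcardQ

end CentralExtension

section Characters

variable {A B K : Type*} [CommGroup A] [CommGroup B] [Field K] [IsAlgClosed K]

theorem exists_pow_eq_units {n : ℕ} (hn : n ≠ 0) (u : Kˣ) : ∃ v : Kˣ, v ^ n = u := by
  obtain ⟨z, hz⟩ := IsAlgClosed.exists_pow_nat_eq (u : K) (Nat.pos_of_ne_zero hn)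
  have hunit : IsUnit z := (isUnit_pow_iff hn).mp (hz ▸ u.isUnit)
  exact ⟨hunit.unit, Units.ext (by simpa using hz)⟩

theorem exists_monoidHom_units_comp_eq (φ : A →* B) (ρ : A →* Kˣ) (h : φ.ker ≤ ρ.ker) :
    ∃ χ : B →* Kˣ, χ.comp φ = ρ := by
  let _ : RootableBy Kˣ ℤ :=
    let _ := rootableByOfPowLeftSurj Kˣ ℕ fun hn => exists_pow_eq_units hn
    Group.rootableByIntOfRootableByNat Kˣ
  let _ : DivisibleBy (Additive Kˣ) ℤ :=
    { div := fun a n => .ofMul (RootableBy.root a.toMul n)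
      div_zero := fun a => congrArg Additive.ofMul (RootableBy.root_zero a.toMul)
      div_cancel := fun a hn => congrArg Additive.ofMul (RootableBy.root_cancel a.toMul hn) }
  obtain ⟨χ, hχ⟩ := (Module.Baer.of_divisible (Additive Kˣ)).extension_property_addMonoidHom
    (MonoidHom.toAdditive (QuotientGroup.kerLift φ)) (QuotientGroup.kerLift_injective φ)
    (MonoidHom.toAdditive (QuotientGroup.lift φ.ker ρ h))
  exact ⟨MonoidHom.toAdditive.symm χ, MonoidHom.ext fun a =>
    congrArg Additive.toMul (DFunLike.congr_fun hχ (.ofMul (a : A ⧸ φ.ker)))⟩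

end Characters

/-- Two-cocycles of `G` with values in the trivial `G`-module `M`, written multiplicatively and
not assumed to be normalized. -/
structure TwoCocycle (G M : Type*) [Group G] [CommGroup M] where
  toFun : G → G → M
  map_mul_mul' : ∀ g h j, toFun (g * h) j * toFun g h = toFun h j * toFun g (h * j)

namespace TwoCocycle

variable {G M : Type*} [Group G] [CommGroup M]

instance : CoeFun (TwoCocycle G M) fun _ => G → G → M := ⟨toFun⟩

variable (κ : TwoCocycle G M)

theorem map_mul_mul (g h j : G) : κ (g * h) j * κ g h = κ h j * κ g (h * j) :=
  κ.map_mul_mul' g h j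

theorem map_one_left (g : G) : κ 1 g = κ 1 1 := by
  simpa using (κ.map_mul_mul 1 1 g).symm

theorem map_one_right (g : G) : κ g 1 = κ 1 1 := by
  simpa using κ.map_mul_mul g 1 1

/-- The central extension of `G` by `M` defined by a two-cocycle: the set `G × M` with the product
twisted by the cocycle. -/
@[ext]
structure Extension (κ : TwoCocycle G M) where
  fst : G
  snd : M

namespace Extension

variable {κ}

instance : Mul κ.Extension := ⟨fun x y => ⟨x.fst * y.fst, x.snd * y.snd * κ x.fst y.fst⟩⟩

instance : One κ.Extension := ⟨⟨1, (κ 1 1)⁻¹⟩⟩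

instance : Inv κ.Extension :=
  ⟨fun x => ⟨x.fst⁻¹, x.snd⁻¹ * (κ x.fst⁻¹ x.fst)⁻¹ * (κ 1 1)⁻¹⟩⟩

@[simp] theorem mul_fst (x y : κ.Extension) : (x * y).fst = x.fst * y.fst := rfl

@[simp] theorem mul_snd (x y : κ.Extension) :
    (x * y).snd = x.snd * y.snd * κ x.fst y.fst := rfl

@[simp] theorem one_fst : (1 : κ.Extension).fst = 1 := rfl

@[simp] theorem one_snd : (1 : κ.Extension).snd = (κ 1 1)⁻¹ := rfl

@[simp] theorem inv_fst (x : κ.Extension) : x⁻¹.fst = x.fst⁻¹ := rfl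

@[simp] theorem inv_snd (x : κ.Extension) :
    x⁻¹.snd = x.snd⁻¹ * (κ x.fst⁻¹ x.fst)⁻¹ * (κ 1 1)⁻¹ := rfl

instance : Group κ.Extension := Group.ofLeftAxioms
  (fun x y z => Extension.ext (mul_assoc _ _ _) <| by
    calc x.snd * y.snd * κ x.fst y.fst * z.snd * κ (x.fst * y.fst) z.fst
        = x.snd * y.snd * z.snd * (κ (x.fst * y.fst) z.fst * κ x.fst y.fst) := by
          simp only [mul_assoc, mul_comm, mul_left_comm]
      _ = x.snd * y.snd * z.snd * (κ y.fst z.fst * κ x.fst (y.fst * z.fst)) := by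
          rw [κ.map_mul_mul]
      _ = x.snd * (y.snd * z.snd * κ y.fst z.fst) * κ x.fst (y.fst * z.fst) := by
          simp only [mul_assoc])
  (fun x => Extension.ext (one_mul _) (by simp [map_one_left]))
  (fun x => Extension.ext (inv_mul_cancel _) (by simp [mul_assoc, mul_comm]))

end Extension

/-- The projection of the extension onto `G`. -/
def proj : κ.Extension →* G where
  toFun := Extension.fst
  map_one' := rfl
  map_mul' _ _ := rfl

/-- The inclusion of `M` into the extension; the factor `(κ 1 1)⁻¹` accounts for cocycles that are
not normalized. -/
def incl : M →* κ.Extension where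
  toFun m := ⟨1, m * (κ 1 1)⁻¹⟩
  map_one' := Extension.ext rfl (one_mul _)
  map_mul' a b := Extension.ext (one_mul _).symm (by simp [mul_assoc, mul_left_comm])

theorem incl_mul_mk_one (m : M) (g : G) : κ.incl m * ⟨g, 1⟩ = ⟨g, m⟩ :=
  Extension.ext (one_mul g) (by simp [incl, map_one_left])

theorem mk_one_mul_mk_one (g h : G) :
    (⟨g, 1⟩ * ⟨h, 1⟩ : κ.Extension) = κ.incl (κ g h) * ⟨g * h, 1⟩ := by
  rw [incl_mul_mk_one]
  exact Extension.ext rfl (by simp)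

theorem proj_surjective : Function.Surjective κ.proj := fun g => ⟨⟨g, 1⟩, rfl⟩

theorem incl_injective : Function.Injective κ.incl := fun _ _ h =>
  mul_right_cancel (congrArg Extension.snd h)

theorem ker_proj : κ.proj.ker = κ.incl.range := by
  ext x
  constructor
  · intro hx
    exact ⟨x.snd * κ 1 1, Extension.ext (MonoidHom.mem_ker.mp hx).symm (by simp [incl])⟩
  · rintro ⟨m, rfl⟩
    rfl

theorem ker_proj_le_center : κ.proj.ker ≤ center κ.Extension := by
  rw [ker_proj]
  rintro _ ⟨m, rfl⟩
  refine mem_center_iff.mpr fun x => Extension.ext ?_ ?_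
  · simp [incl]
  · simp [incl, map_one_left, map_one_right, mul_comm]

/-- The elements of `M` that become products of commutators in the extension. -/
def commutatorPart : Subgroup M := (commutator κ.Extension).comap κ.incl

theorem card_commutator_extension : Nat.card (commutator κ.Extension) =
    Nat.card κ.commutatorPart * Nat.card (commutator G) := by
  rw [card_commutator_eq_card_ker_inf_mul κ.proj_surjective, ker_proj, ← map_comap_eq]
  exact congrArg (· * _) (card_map_of_injective κ.incl_injective)

theorem exists_mul_eq_of_eq_one_on_commutatorPart {K : Type*} [Field K] [IsAlgClosed K]
    {ρ : M →* Kˣ} (hρ : ∀ m ∈ κ.commutatorPart, ρ m = 1) :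
    ∃ b : G → Kˣ, ∀ g h, ρ (κ g h) * b (g * h) = b g * b h := by
  have hker : (Abelianization.of.comp κ.incl).ker ≤ ρ.ker := by
    rw [← MonoidHom.comap_ker, Abelianization.ker_of]
    exact hρ
  obtain ⟨χ, hχ⟩ := exists_monoidHom_units_comp_eq _ ρ hker
  refine ⟨fun g => χ (Abelianization.of ⟨g, 1⟩), fun g h => ?_⟩
  rw [← hχ, ← map_mul χ, ← map_mul Abelianization.of, mk_one_mul_mk_one, map_mul, map_mul,
    MonoidHom.comp_apply, MonoidHom.comp_apply]

end TwoCocycle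

section Schur

open groupCohomology

variable {G : Type} [Group G]

/-- The `G`-module whose second cohomology is the Schur multiplier: the multiplicative group `ℂˣ`,
written additively, with trivial action. -/
noncomputable abbrev coeff (G : Type) [Group G] := Rep.trivial ℤ G (Additive ℂˣ)

theorem mem_cocycles₂_coeff_iff (f : G × G → Additive ℂˣ) : f ∈ cocycles₂ (coeff G) ↔
    ∀ g h j : G, f (g * h, j) + f (g, h) = f (h, j) + f (g, h * j) :=
  mem_cocycles₂_iff (A := coeff G) f

theorem mem_coboundaries₂_coeff_iff (f : G × G → Additive ℂˣ) : f ∈ coboundaries₂ (coeff G) ↔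
    ∃ b : G → Additive ℂˣ, ∀ g h : G, f (g, h) + b (g * h) = b g + b h := by
  have hd (b : G → Additive ℂˣ) (g h : G) :
      (d₁₂ (coeff G)).hom b (g, h) = b h - b (g * h) + b g := rfl
  refine exists_congr fun b => ⟨?_, fun hb => funext fun x => ?_⟩
  · rintro rfl g h
    exact (congrArg (· + b (g * h)) (hd b g h)).trans (by abel)
  · refine (hd b x.1 x.2).trans ?_
    rw [eq_sub_of_add_eq (hb x.1 x.2)]
    abel

/-- The cocycle with values in `ℂˣ`-valued functions on the set of all complex two-cocycles of `G`,
whose `f`-th coordinate is `f`. -/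
noncomputable def universalCocycle (G : Type) [Group G] :
    TwoCocycle G (cocycles₂ (coeff G) → ℂˣ) where
  toFun g h f := Additive.toMul (f.1 (g, h) : Additive ℂˣ)
  map_mul_mul' g h j := funext fun f =>
    congrArg Additive.toMul ((mem_cocycles₂_coeff_iff f.1).mp f.2 g h j)

theorem finite_and_card_monoidHom_units_le (H : Type*) [Group H] [Finite H] :
    Finite (H →* ℂˣ) ∧ Nat.card (H →* ℂˣ) ≤ Nat.card H := by
  have : NeZero (Monoid.exponent (Abelianization H)) := ⟨Monoid.exponent_ne_zero_of_finite⟩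
  have hcard : Nat.card (H →* ℂˣ) = Nat.card (Abelianization H) :=
    (Nat.card_congr Abelianization.lift).trans
      (CommGroup.card_monoidHom_of_hasEnoughRootsOfUnity (Abelianization H) ℂ)
  exact ⟨Nat.finite_of_card_ne_zero (hcard ▸ Nat.card_pos.ne'),
    hcard.trans_le (Nat.card_le_card_of_surjective _ QuotientGroup.mk_surjective)⟩

theorem H2π_eq_of_eq_on_commutatorPart {f f' : cocycles₂ (coeff G)}
    (h : ∀ m ∈ (universalCocycle G).commutatorPart, m f = m f') :
    H2π (coeff G) f = H2π (coeff G) f' := by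
  let ev (f : cocycles₂ (coeff G)) : (cocycles₂ (coeff G) → ℂˣ) →* ℂˣ := Pi.evalMonoidHom _ f
  obtain ⟨b, hb⟩ := (universalCocycle G).exists_mul_eq_of_eq_one_on_commutatorPart
    (ρ := ev f / ev f') fun m hm => div_eq_one.mpr (h m hm)
  exact (H2π_eq_iff f f').mpr ((mem_coboundaries₂_coeff_iff _).mpr
    ⟨fun g => .ofMul (b g), fun g j => congrArg Additive.ofMul (hb g j)⟩)

theorem finite_and_card_schurMultiplier_le (G : Type) [Group G]
    [Finite (universalCocycle G).commutatorPart] : Finite (schurMultiplier G) ∧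
      Nat.card (schurMultiplier G) ≤ Nat.card (universalCocycle G).commutatorPart := by
  let T := (universalCocycle G).commutatorPart
  obtain ⟨_, hcard⟩ := finite_and_card_monoidHom_units_le T
  have hπ : Function.Surjective (H2π (coeff G)) := fun x =>
    H2_induction_on x fun f => ⟨f, rfl⟩
  choose s hs using hπ
  let F (x : schurMultiplier G) : T →* ℂˣ := (Pi.evalMonoidHom _ (s x)).comp T.subtype
  have hF : Function.Injective F := fun x y hxy => by
    rw [← hs x, ← hs y]
    exact H2π_eq_of_eq_on_commutatorPart fun m hm => DFunLike.congr_fun hxy ⟨m, hm⟩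
  exact ⟨.of_injective F hF, (Nat.card_le_card_of_injective F hF).trans hcard⟩

theorem finite_and_card_schurMultiplier_le_pow {p k : ℕ} (hp : p.Prime)
    (hG : commutator G ≤ center G) (hcard : Nat.card (commutator G) = p ^ k)
    (hpow : ∀ g : G, g ^ p ∈ commutator G) {S : Finset G} (hS : Subgroup.closure (S : Set G) = ⊤) :
    Finite (schurMultiplier G) ∧
      Nat.card (schurMultiplier G) ≤ p ^ ((#S).choose 2 + (k + 1).choose 2) := by
  let κ := universalCocycle G
  obtain ⟨_, hE⟩ := finite_and_card_commutator_centralExtension_le hp κ.proj_surjective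
    κ.ker_proj_le_center hG hcard hpow hS
  have hκ := κ.card_commutator_extension
  have : Finite κ.commutatorPart := Nat.finite_of_card_ne_zero
    (left_ne_zero_of_mul (hκ ▸ Nat.card_pos.ne'))
  obtain ⟨hfin, hle⟩ := finite_and_card_schurMultiplier_le G
  rw [hκ, hcard, ← add_assoc, pow_add] at hE
  exact ⟨hfin, hle.trans (Nat.le_of_mul_le_mul_right hE (pow_pos hp.pos k))⟩

theorem pairing_mul_mul {M : Type*} [CommGroup M] (B : G →* G →* M) (g h j : G) :
    B (g * h) j * B g h = B h j * B g (h * j) := by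
  rw [map_mul, map_mul, MonoidHom.mul_apply, mul_right_comm, mul_comm, mul_comm (B g j)]

/-- The two-cocycle given by a bimultiplicative pairing. -/
noncomputable def pairingCocycle : Additive (G →* G →* ℂˣ) →+ cocycles₂ (coeff G) where
  toFun B := ⟨fun x => .ofMul (B.toMul x.1 x.2), (mem_cocycles₂_coeff_iff _).mpr fun g h j =>
    congrArg Additive.ofMul (pairing_mul_mul B.toMul g h j)⟩
  map_zero' := rfl
  map_add' _ _ := rfl

theorem exists_mul_eq_of_H2π_pairingCocycle_eq_zero {B : G →* G →* ℂˣ}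
    (hB : H2π (coeff G) (pairingCocycle (.ofMul B)) = 0) :
    ∃ b : G → ℂˣ, ∀ g h, B g h * b (g * h) = b g * b h := by
  obtain ⟨b, hb⟩ := (mem_coboundaries₂_coeff_iff _).mp ((H2π_eq_zero_iff _).mp hB)
  exact ⟨fun g => (b g).toMul, fun g h => congrArg Additive.toMul (hb g h)⟩

theorem apply_mul_of_mem_commutator {B : G →* G →* ℂˣ} {b : G → ℂˣ}
    (hb : ∀ g h, B g h * b (g * h) = b g * b h) {z : G} (hz : z ∈ commutator G) (g : G) :
    b (z * g) = b z * b g := by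
  rw [← hb, (Abelianization.commutator_subset_ker B hz : B z = 1), MonoidHom.one_apply, one_mul]

theorem apply_mul_apply_commutatorElement {B : G →* G →* ℂˣ} {b : G → ℂˣ}
    (hb : ∀ g h, B g h * b (g * h) = b g * b h) (g h : G) : B g h * b ⁅g, h⁆ = B h g := by
  have hgh : b (g * h) = b ⁅g, h⁆ * b (h * g) := by
    rw [← apply_mul_of_mem_commutator hb (commutatorElement_mem_commutator g h)]
    exact congrArg b (by group)
  refine mul_right_cancel (b := b (h * g)) ?_
  rw [mul_assoc, ← hgh, hb, hb, mul_comm]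

/-- A pairing with trivial cohomology class agrees with its transpose up to a character of the
commutator subgroup, so modulo symmetric pairings the kernel of the map to `H²` embeds in the
character group of the commutator subgroup. -/
theorem card_le_card_schurMultiplier_mul_card_commutator [Finite (schurMultiplier G)]
    [Finite (commutator G)] {A : Type*} [AddCommGroup A] [Finite A]
    (β : A →+ Additive (G →* G →* ℂˣ))
    (hβ : ∀ a, (∀ g h, (β a).toMul g h = (β a).toMul h g) → a = 0) :
    Nat.card A ≤ Nat.card (schurMultiplier G) * Nat.card (commutator G) := by
  let Θ : A →+ H2 (coeff G) :=
    (H2π (coeff G)).hom.toAddMonoidHom.comp (pairingCocycle.comp β)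
  have hker (a : Θ.ker) :
      ∃ b : G → ℂˣ, ∀ g h, (β a).toMul g h * b (g * h) = b g * b h :=
    exists_mul_eq_of_H2π_pairingCocycle_eq_zero a.2
  choose b hb using hker
  let R (a : Θ.ker) : commutator G →* ℂˣ :=
    .mk' (fun z => b a z) fun z w => apply_mul_of_mem_commutator (hb a) z.2 w
  have hR : Function.Injective R := fun a c hac => by
    refine Subtype.ext (sub_eq_zero.mp (hβ _ fun g h => ?_))
    have hbb : b a ⁅g, h⁆ = b c ⁅g, h⁆ :=
      DFunLike.congr_fun hac ⟨_, commutatorElement_mem_commutator g h⟩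
    rw [map_sub, toMul_sub, MonoidHom.div_apply, MonoidHom.div_apply, MonoidHom.div_apply,
      MonoidHom.div_apply, ← apply_mul_apply_commutatorElement (hb a) g h,
      ← apply_mul_apply_commutatorElement (hb c) g h, hbb]
    exact (mul_div_mul_right_eq_div _ _ _).symm
  obtain ⟨_, hchar⟩ := finite_and_card_monoidHom_units_le (commutator G)
  have hkerle : Nat.card Θ.ker ≤ Nat.card (commutator G) :=
    (Nat.card_le_card_of_injective R hR).trans hchar
  have : Finite (H2 (coeff G)) := ‹Finite (schurMultiplier G)›
  have hindex : Θ.ker.index ≤ Nat.card (schurMultiplier G) := by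
    rw [AddSubgroup.index_ker]
    exact Nat.card_le_card_of_injective (fun y : Θ.range => (y : H2 (coeff G)))
      Subtype.val_injective
  rw [← Θ.ker.card_mul_index, mul_comm]
  exact Nat.mul_le_mul hindex hkerle

end Schur

section BilinearForms

open Matrix

/-- The strictly upper triangular matrix with prescribed entries above the diagonal, column by
column. -/
def strictlyUpperTriangular (R : Type*) [CommRing R] (n : ℕ) :
    ((j : Fin n) → Fin j → R) →ₗ[R] Matrix (Fin n) (Fin n) R where
  toFun t := .of fun i j => if hij : i < j then t j ⟨i, hij⟩ else 0
  map_add' t u := by ext i j; by_cases hij : i < j <;> simp [hij]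
  map_smul' c t := by ext i j; by_cases hij : i < j <;> simp [hij]

theorem eq_zero_of_isSymm_strictlyUpperTriangular {R : Type*} [CommRing R] {n : ℕ}
    {t : (j : Fin n) → Fin j → R} (ht : (strictlyUpperTriangular R n t).IsSymm) : t = 0 := by
  funext j i
  have hij : i.castLE j.is_le' < j := i.is_lt
  simpa [strictlyUpperTriangular, hij, hij.not_gt] using ht.apply j (i.castLE j.is_le')

theorem isSymm_of_dotProduct_mulVec_comm {R n : Type*} [CommRing R] [Fintype n] {M : Matrix n n R}
    (h : ∀ v w, v ⬝ᵥ M *ᵥ w = w ⬝ᵥ M *ᵥ v) : M.IsSymm := by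
  classical
  exact .ext fun i j => by simpa using h (Pi.single j 1) (Pi.single i 1)

theorem card_strictlyTriangular (n : ℕ) (R : Type*) :
    Nat.card ((j : Fin n) → Fin j → R) = Nat.card R ^ n.choose 2 := by
  simp only [Nat.card_pi, Finset.prod_const, Finset.card_univ, Fintype.card_fin,
    Finset.prod_pow_eq_pow_sum]
  rw [Fin.sum_univ_eq_sum_range (fun j => j) n, Finset.sum_range_id, Nat.choose_two_right]

theorem exists_injective_zmod_addMonoidHom_units (n : ℕ) [NeZero n] :
    ∃ ψ : ZMod n →+ Additive ℂˣ, Function.Injective ψ :=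
  ⟨(MonoidHom.toAdditive Circle.toUnits).comp (ZMod.toCircle (N := n)).toAddMonoidHom,
    fun _ _ hab => ZMod.injective_toCircle (Circle.ext (congrArg Units.val hab))⟩

theorem pow_choose_two_finrank_le_card_schurMultiplier_mul {p : ℕ} [Fact p.Prime]
    {G : Type} {V : Type*} [Group G] [Finite (schurMultiplier G)] [Finite (commutator G)]
    [AddCommGroup V] [Module (ZMod p) V] [Module.Finite (ZMod p) V]
    {q : G →* Multiplicative V} (hq : Function.Surjective q) :
    p ^ (Module.finrank (ZMod p) V).choose 2 ≤
      Nat.card (schurMultiplier G) * Nat.card (commutator G) := by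
  set n := Module.finrank (ZMod p) V
  let x (g : G) : Fin n → ZMod p := (Module.finBasis (ZMod p) V).equivFun (q g).toAdd
  have hx (g h : G) : x (g * h) = x g + x h := by simp [x]
  have hsurj : Function.Surjective x :=
    (Module.finBasis (ZMod p) V).equivFun.surjective.comp (Multiplicative.toAdd.surjective.comp hq)
  obtain ⟨ψ, hψ⟩ := exists_injective_zmod_addMonoidHom_units p
  let U := strictlyUpperTriangular (ZMod p) n
  let pairing (t : (j : Fin n) → Fin j → ZMod p) : G →* G →* ℂˣ :=
    .mk' (fun g => .mk' (fun h => (ψ (x g ⬝ᵥ U t *ᵥ x h)).toMul) fun h h' => by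
      rw [hx, mulVec_add, dotProduct_add, map_add, toMul_add]) fun g g' => MonoidHom.ext fun h => by
      simp only [hx, add_dotProduct, map_add, toMul_add, MonoidHom.mk'_apply, MonoidHom.mul_apply]
  have pairing_add (t u) : pairing (t + u) = pairing t * pairing u :=
    MonoidHom.ext fun g => MonoidHom.ext fun h => by
      simp only [pairing, map_add, add_mulVec, dotProduct_add, toMul_add, MonoidHom.mk'_apply,
        MonoidHom.mul_apply]
  let β : ((j : Fin n) → Fin j → ZMod p) →+ Additive (G →* G →* ℂˣ) :=
    .mk' (fun t => .ofMul (pairing t)) fun t u => congrArg Additive.ofMul (pairing_add t u)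
  have hcard := card_strictlyTriangular n (ZMod p)
  rw [Nat.card_zmod] at hcard
  rw [← hcard]
  refine card_le_card_schurMultiplier_mul_card_commutator β fun t ht =>
    eq_zero_of_isSymm_strictlyUpperTriangular (isSymm_of_dotProduct_mulVec_comm ?_)
  exact hsurj.forall₂.mpr fun g h => hψ (congrArg Additive.ofMul (ht g h))

end BilinearForms

section Frattini

variable {G : Type*} [Group G] [Finite G]

theorem index_eq_of_isCoatom {p : ℕ} (hp : p.Prime) (hG : IsPGroup p G) {M : Subgroup G}
    (hM : IsCoatom M) : M.index = p := by
  have := Fact.mk hp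
  obtain ⟨n, hn⟩ := (hG.to_subgroup M).exists_card_eq
  obtain ⟨k, hk⟩ := hG.index M
  have hk0 : k ≠ 0 := by
    rintro rfl
    exact hM.1 (index_eq_one.mp (by simpa using hk))
  have hdvd : p ^ (n + 1) ∣ Nat.card G := by
    rw [← M.card_mul_index, hn, hk, pow_succ]
    exact Nat.mul_dvd_mul_left _ (dvd_pow_self p hk0)
  obtain ⟨K, hK, hMK⟩ := Sylow.exists_subgroup_card_pow_succ hdvd hn
  have hlt : M < K := hMK.lt_of_ne fun hMK => by
    rw [← hMK, hn] at hK
    exact absurd (Nat.pow_right_injective hp.two_le hK) n.lt_succ_self.ne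
  have hcard := M.card_mul_index
  rw [← card_top (G := G), ← hM.2 K hlt, hK, hn, pow_succ] at hcard
  exact Nat.eq_of_mul_eq_mul_left (pow_pos hp.pos n) hcard

theorem pow_mem_frattini {p : ℕ} (hp : p.Prime) (hG : IsPGroup p G) (g : G) :
    g ^ p ∈ frattini G := by
  have := Fact.mk hp
  have := hG.isNilpotent
  simp only [frattini, Order.radical, mem_iInf]
  intro M hM
  have : M.Normal := Group.normalizerCondition_of_isNilpotent.normal_of_coatom M hM
  exact index_eq_of_isCoatom hp hG hM ▸ M.pow_index_mem g

theorem rank_le_finrank_of_ker_le_frattini {p : ℕ} [Fact p.Prime] {V : Type*} [AddCommGroup V]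
    [Module (ZMod p) V] [Module.Finite (ZMod p) V] {q : G →* Multiplicative V}
    (hq : Function.Surjective q) (hker : q.ker ≤ frattini G) :
    Group.rank G ≤ Module.finrank (ZMod p) V := by
  classical
  let basis := Module.finBasis (ZMod p) V
  choose e he using fun i => hq (.ofAdd (basis i))
  let K := Subgroup.closure (Set.range e)
  let W : Submodule (ZMod p) V := AddSubgroup.toZModSubmodule p (Subgroup.toAddSubgroup' (K.map q))
  have hW : W = ⊤ := top_le_iff.mp <| basis.span_eq ▸ Submodule.span_le.mpr (by
    rintro _ ⟨i, rfl⟩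
    exact ⟨e i, subset_closure ⟨i, rfl⟩, he i⟩)
  have hKer : K ⊔ q.ker = ⊤ := by
    rw [← comap_map_eq]
    exact top_le_iff.mp fun g _ => (hW ▸ Submodule.mem_top : (q g).toAdd ∈ W)
  have hK : K = ⊤ := frattini_nongenerating (top_le_iff.mp (hKer ▸ sup_le_sup_left hker K))
  calc Group.rank G ≤ #(Finset.univ.image e) := Group.rank_le (by simpa using hK)
    _ ≤ Module.finrank (ZMod p) V := Finset.card_image_le.trans (Finset.card_fin _).le

end Frattini

theorem pow_choose_two_rank_le_card_schurMultiplier_mul {p : ℕ} (hp : p.Prime) {G : Type} [Group G]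
    [Finite G] [Finite (schurMultiplier G)] (hpow : ∀ g : G, g ^ p ∈ commutator G)
    (hΦ : commutator G ≤ frattini G) :
    p ^ (Group.rank G).choose 2 ≤ Nat.card (schurMultiplier G) * Nat.card (commutator G) := by
  have := Fact.mk hp
  have hsmul (v : Additive (Abelianization G)) : p • v = 0 := by
    obtain ⟨g, rfl⟩ := QuotientGroup.mk_surjective v
    exact (QuotientGroup.eq_one_iff (g ^ p)).mpr (hpow g)
  have : Module (ZMod p) (Additive (Abelianization G)) := AddCommGroup.zmodModule hsmul
  let q : G →* Multiplicative (Additive (Abelianization G)) := Abelianization.of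
  have hq : Function.Surjective q := QuotientGroup.mk_surjective
  have hrank := rank_le_finrank_of_ker_le_frattini (p := p) hq
    ((Abelianization.ker_of G).trans_le hΦ)
  exact (Nat.pow_le_pow_right hp.pos (Nat.choose_le_choose 2 hrank)).trans
    (pow_choose_two_finrank_le_card_schurMultiplier_mul hq)

end SchurMultiplier

theorem schur_multiplier_bounds_special_center_p_cube_general (p d k : ℕ) (hp : p.Prime)
    (G : Type) [Group G] [Finite G] (hpG : IsPGroup p G)
    (hcomm : commutator G ≤ Subgroup.center G) (hΦ : frattini G = commutator G)
    (hk : Nat.card (commutator G) = p ^ k) (hd : Group.rank G = d) :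
    (p : ℝ) ^ ((d : ℝ) * ((d : ℝ) - 1) / 2 - k) ≤ (Nat.card (schurMultiplier G) : ℝ) ∧
    (Nat.card (schurMultiplier G) : ℝ) ≤
      (p : ℝ) ^ ((d : ℝ) * ((d : ℝ) - 1) / 2 + (k : ℝ) * (k + 1) / 2) := by
  have hpow (g : G) : g ^ p ∈ commutator G := hΦ ▸ SchurMultiplier.pow_mem_frattini hp hpG g
  obtain ⟨S, hSd, hS⟩ := Group.rank_spec G
  obtain ⟨_, hupper⟩ :=
    SchurMultiplier.finite_and_card_schurMultiplier_le_pow hp hcomm hk hpow hS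
  have hlower :=
    SchurMultiplier.pow_choose_two_rank_le_card_schurMultiplier_mul hp hpow hΦ.ge
  rw [hSd, hd] at hupper
  rw [hd, hk] at hlower
  have hp0 : (0 : ℝ) < p := Nat.cast_pos.mpr hp.pos
  have hk2 : (k : ℝ) * (k + 1) / 2 = ((k + 1).choose 2 : ℕ) := by
    rw [Nat.cast_choose_two]; push_cast; ring
  rw [← Nat.cast_choose_two, hk2]
  constructor
  · rw [Real.rpow_sub hp0, Real.rpow_natCast, Real.rpow_natCast, div_le_iff₀ (pow_pos hp0 k)]
    exact_mod_cast hlower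
  · rw [← Nat.cast_add, Real.rpow_natCast]
    exact_mod_cast hupper

/-- Corollary 2 for special `p`-groups with center of order `p ^ 3`:
`p ^ (d * (d - 1) / 2 - 3) ≤ |M(G₂)| ≤ p ^ (d * (d - 1) / 2 + 6)`.
A special `p`-group is a finite `p`-group of nilpotency class 2 whose center
coincides with its derived subgroup and with its Frattini subgroup. -/
theorem schur_multiplier_bounds_special_center_p_cube (p d : ℕ) (hp : p.Prime)
    (G : Type) [Group G] [Finite G] [Group.IsNilpotent G]
    (hpG : IsPGroup p G)
    (hc : Group.nilpotencyClass G = 2)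
    (hzc : Subgroup.center G = commutator G)
    (hzf : Subgroup.center G = frattini G)
    (hz : Nat.card (Subgroup.center G) = p ^ 3)
    (hd : Group.rank G = d) :
    (p : ℝ) ^ ((d : ℝ) * ((d : ℝ) - 1) / 2 - 3) ≤ (Nat.card (schurMultiplier G) : ℝ) ∧
    (Nat.card (schurMultiplier G) : ℝ) ≤ (p : ℝ) ^ ((d : ℝ) * ((d : ℝ) - 1) / 2 + 6) := by
  have h := schur_multiplier_bounds_special_center_p_cube_general p d 3 hp G hpG hzc.ge
    (hzf.symm.trans hzc) (hzc ▸ hz) hd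
  norm_num at h
  exact h
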